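/- arXiv:2403.01327 — 2 statements merged into one kernel-verified Lean document; each statement's English description precedes it below -/
import Mathlib

section
/- Let d ≥ 1 and let S be a finite subset of the unit sphere S^{d-1} ⊂ ℝ^d with |S| = n ≥ 2. Let ℓ ∈ ℕ⁺ and let ε > 0 satisfy ε < 1 − |⟨x,y⟩| for all x, y ∈ S with x ≠ y. Set N = ⌈48 (π/√2)^{2ℓ} log n / ε²⌉. Then there exists a map φ : S → ℝ^N all of whose coordinates lie in {−1/√N, 1/√N}, such that for all x, y ∈ S, |g_ℓ(⟨φ(x), φ(y)⟩) − ⟨x, y⟩| ≤ ε (2 − 2|⟨x, y⟩|)^{1 − 2^{−ℓ}}. -/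
/-!
Let `f = (2/π) arcsin` (`arcsinKernel`), the inverse of `g` on `[-1, 1]`, and let `f_ℓ` be its `ℓ`-th
iterate. The sketch consists of `N` independent samples of a random sign vector `(s_x)_{x ∈ S}` with
`E[s_x s_y] = f_ℓ(⟨x, y⟩)`; applying `g_ℓ` to the empirical correlation recovers `⟨x, y⟩`.

*Existence of the sign vector.* By Grothendieck's identity (`signCorr_eq`), the sides of a uniformly
random hyperplane on which unit vectors `u, v` lie have expected product `f(⟨u, v⟩)`. It is proved
without computing an integral: the separation probability is bounded, rotation invariant and additive
in the angle, hence linear (`linear_of_additive`). Random signs on a finite probability space are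
themselves unit vectors of a Euclidean space, so the rounding can be iterated `ℓ` times
(`exists_sign_measure_iterate`).

*Concentration.* Put `ρ = √2/π` and `δ = ε ρ^ℓ / 2`. The choice of `N` gives `N δ² ≥ 12 log n`, so by
Hoeffding's inequality and a union bound some sample has all empirical correlations within `δ` of
their means (`exists_samples`).

*Stability of `g_ℓ`.* From `|g'(s)| ≤ (π/√2) (1 - |g s|)^{1/2}` and `1 - |s| ≤ (1 - |g s|)^{1/2}`, an
error `δ` in the argument becomes, to first order, at most `δ ρ^{-ℓ} (1 - |t|)^{1 - 2^{-ℓ}}` in the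
value `t = g_ℓ(r)`. The hypothesis `ε < 1 - |⟨x, y⟩|` keeps the second-order terms small compared with
the first-order ones, so they cost only a factor `2` altogether (`error_propagation`).
-/

open Real RealInnerProductSpace

/-- `g(t) = sin(πt/2)`. -/
noncomputable def g (t : ℝ) : ℝ := Real.sin (Real.pi * t / 2)

/-! ### The iterates of `g` and their stability -/

/-- `f(t) = (2/π) arcsin t`, the inverse of `g` on `[-1, 1]`. -/
noncomputable def arcsinKernel (t : ℝ) : ℝ := 2 / π * arcsin t

lemma abs_arcsinKernel_le (t : ℝ) : |arcsinKernel t| ≤ 1 := by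
  have h : |arcsin t| ≤ π / 2 := abs_le.2 ⟨neg_pi_div_two_le_arcsin t, arcsin_le_pi_div_two t⟩
  rw [arcsinKernel, abs_mul, abs_of_pos (by positivity)]
  calc 2 / π * |arcsin t| ≤ 2 / π * (π / 2) := by gcongr
    _ = 1 := by field_simp

lemma g_arcsinKernel {t : ℝ} (ht : |t| ≤ 1) : g (arcsinKernel t) = t := by
  have h : π * (2 / π * arcsin t) / 2 = arcsin t := by field_simp
  rw [g, arcsinKernel, h, sin_arcsin (abs_le.1 ht).1 (abs_le.1 ht).2]

lemma abs_arcsinKernel_iterate_le {t : ℝ} (ht : |t| ≤ 1) (k : ℕ) : |arcsinKernel^[k] t| ≤ 1 := by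
  cases k with
  | zero => simpa using ht
  | succ k => rw [Function.iterate_succ_apply']; exact abs_arcsinKernel_le _

lemma g_iterate_arcsinKernel_iterate {t : ℝ} (ht : |t| ≤ 1) (k : ℕ) :
    g^[k] (arcsinKernel^[k] t) = t := by
  induction k with
  | zero => rfl
  | succ k ih =>
    rw [Function.iterate_succ_apply, Function.iterate_succ_apply',
      g_arcsinKernel (abs_arcsinKernel_iterate_le ht k), ih]

lemma g_one : g 1 = 1 := by simp [g]

lemma abs_g_le (s : ℝ) : |g s| ≤ 1 := abs_sin_le_one _

lemma abs_g_iterate_le {r : ℝ} (hr : |r| ≤ 1) (k : ℕ) : |g^[k] r| ≤ 1 := by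
  cases k with
  | zero => simpa using hr
  | succ k => rw [Function.iterate_succ_apply']; exact abs_g_le _

lemma abs_g_eq {s : ℝ} (hs : |s| ≤ 1) : |g s| = sin (π * |s| / 2) := by
  have hpi := pi_pos
  have h0 : 0 ≤ sin (π * |s| / 2) := by
    apply sin_nonneg_of_nonneg_of_le_pi
    · positivity
    · nlinarith
  rcases abs_cases s with ⟨h, _⟩ | ⟨h, _⟩
  · rw [h] at h0 ⊢
    rw [g, abs_of_nonneg h0]
  · rw [h] at h0 ⊢
    have : π * -s / 2 = -(π * s / 2) := by ring
    rw [this, sin_neg] at h0 ⊢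
    rw [g, abs_of_nonpos (by linarith)]

lemma le_abs_g {s : ℝ} (hs : |s| ≤ 1) : |s| ≤ |g s| := by
  have hpi := pi_pos
  rw [abs_g_eq hs]
  have := mul_le_sin (x := π * |s| / 2) (by positivity) (by nlinarith)
  calc |s| = 2 / π * (π * |s| / 2) := by field_simp
    _ ≤ _ := this

/-- With `b = 1 - |s|` this is `1 - cos(πb/2) = 2 sin²(πb/4) ≥ b²`, where the last step is
concavity of `sin` on `[0, π/4]`. -/
lemma sq_one_sub_abs_le {s : ℝ} (hs : |s| ≤ 1) : (1 - |s|) ^ 2 ≤ 1 - |g s| := by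
  have hpi := pi_pos
  rw [abs_g_eq hs]
  set b := 1 - |s| with hb
  have hb0 : 0 ≤ b := by linarith
  have hb1 : b ≤ 1 := by have := abs_nonneg s; linarith
  have e1 : sin (π * |s| / 2) = 1 - 2 * sin (π * b / 4) ^ 2 := by
    have : π * |s| / 2 = π / 2 - 2 * (π * b / 4) := by rw [hb]; ring
    rw [this, sin_pi_div_two_sub, cos_two_mul, cos_sq']; ring
  have e2 : b * (√2 / 2) ≤ sin (π * b / 4) := by
    have hx : (0 : ℝ) ∈ Set.Icc 0 π := ⟨le_rfl, hpi.le⟩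
    have hy : π / 4 ∈ Set.Icc 0 π := ⟨by positivity, by linarith⟩
    have hb' : 0 ≤ 1 - b := by linarith
    have h := strictConcaveOn_sin_Icc.concaveOn.2 hx hy hb' hb0 (by ring)
    simp only [smul_eq_mul, sin_zero, mul_zero, zero_add, sin_pi_div_four] at h
    calc _ ≤ _ := h
      _ = _ := by ring_nf
  have e3 : (b * (√2 / 2)) ^ 2 ≤ sin (π * b / 4) ^ 2 := by gcongr
  have e4 : (b * (√2 / 2)) ^ 2 = b ^ 2 / 2 := by
    rw [mul_pow, div_pow, sq_sqrt (by norm_num)]; ring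
  rw [e1]; linarith

/-- First-order stability of `g`; no domain restriction is needed because
`g s' - g s = 2 sin(π(s'-s)/4) cos(πs/2 + π(s'-s)/4)`. -/
lemma abs_g_sub_le (s s' : ℝ) :
    |g s' - g s| ≤ π / 2 * |s' - s| * (√2 * √(1 - |g s|) + π / 4 * |s' - s|) := by
  have hpi := pi_pos
  have e1 : g s' - g s = 2 * sin (π * (s' - s) / 4) * cos (π * s / 2 + π * (s' - s) / 4) := by
    rw [g, g, sin_sub_sin]; congr 2 <;> ring_nf
  have habs : |π * (s' - s) / 4| = π / 4 * |s' - s| := by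
    rw [show π * (s' - s) / 4 = π / 4 * (s' - s) by ring, abs_mul, abs_of_pos (by positivity)]
  have e2 : |sin (π * (s' - s) / 4)| ≤ π / 4 * |s' - s| := habs ▸ abs_sin_le_abs
  have e3 : |cos (π * s / 2)| ≤ √2 * √(1 - |g s|) := by
    rw [← sqrt_mul (by norm_num)]
    apply le_sqrt_of_sq_le
    rw [sq_abs, cos_sq']
    change 1 - g s ^ 2 ≤ _
    have := abs_g_le s
    rw [← sq_abs (g s)]
    nlinarith [sq_nonneg (1 - |g s|)]
  have e4 : |cos (π * s / 2 + π * (s' - s) / 4)| ≤ √2 * √(1 - |g s|) + π / 4 * |s' - s| := by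
    rw [cos_add]
    refine (abs_sub _ _).trans ?_
    rw [abs_mul, abs_mul]
    refine add_le_add ((mul_le_of_le_one_right (abs_nonneg _) (abs_cos_le_one _)).trans e3)
      ((mul_le_of_le_one_left (abs_nonneg _) (abs_sin_le_one _)).trans e2)
  rw [e1, abs_mul, abs_mul, abs_two]
  calc _ ≤ 2 * (π / 4 * |s' - s|) * (√2 * √(1 - |g s|) + π / 4 * |s' - s|) := by gcongr
    _ = _ := by ring

/-- The contraction ratio `√2/π`, the inverse of the base `π/√2` in the sample size. -/
noncomputable def ratio : ℝ := √2 / π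

lemma ratio_pos : 0 < ratio := by unfold ratio; positivity

lemma ratio_le_half : ratio ≤ 1 / 2 := by
  unfold ratio
  rw [div_le_iff₀ pi_pos]
  have : √2 ≤ 3 / 2 := by rw [sqrt_le_left (by norm_num)]; norm_num
  linarith [pi_gt_three]

/-- The slowly growing constants `(1 + 2^{-j})/2 ∈ [1/2, 1]` that absorb the second-order terms
when the error is propagated from level `j = ℓ` down to level `0`. -/
noncomputable def slack (j : ℕ) : ℝ := (1 + (1 / 2) ^ j) / 2

lemma slack_pos (j : ℕ) : 0 < slack j := by unfold slack; positivity

lemma slack_le_one (j : ℕ) : slack j ≤ 1 := by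
  unfold slack
  have : (1 / 2 : ℝ) ^ j ≤ 1 := pow_le_one₀ (by norm_num) (by norm_num)
  linarith

/-- One step of error propagation, from level `j + 1` to level `j`, at a point `s`: `e` is the error
at `s`, `A` stands for the power of `1 - |s|` that controls it, and `q` for `√(1 - |g s|)`. -/
lemma error_step {ε e A q : ℝ} (j : ℕ) (he0 : 0 ≤ e) (hA0 : 0 ≤ A) (hA1 : A ≤ 1)
    (hε : 0 < ε) (hεq : ε ≤ q) (he : e ≤ ε * ratio ^ (j + 1) * slack (j + 1) * A) :
    π / 2 * e * (√2 * q + π / 4 * e) ≤ ε * ratio ^ j * slack j * (A * q) := by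
  have hpi := pi_pos
  have hρ := ratio_pos
  have hc := slack_pos (j + 1)
  have hc1 := slack_le_one (j + 1)
  have hq : 0 < q := hε.trans_le hεq
  have hs2 : √2 * √2 = 2 := mul_self_sqrt (by norm_num)
  have hρdef : π * ratio = √2 := by unfold ratio; field_simp
  have h1 : π / 4 * e ≤ √2 * q * (slack (j + 1) * (1 / 2) ^ (j + 1) / 2) := by
    have hpow : ratio ^ j ≤ (1 / 2) ^ j := pow_le_pow_left₀ hρ.le ratio_le_half j
    calc π / 4 * e ≤ π / 4 * (ε * ratio ^ (j + 1) * slack (j + 1) * A) := by gcongr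
      _ ≤ π / 4 * (q * ratio ^ (j + 1) * slack (j + 1) * 1) := by gcongr
      _ = π * ratio * q * slack (j + 1) / 4 * ratio ^ j := by ring
      _ ≤ π * ratio * q * slack (j + 1) / 4 * (1 / 2) ^ j := by gcongr
      _ = _ := by rw [hρdef]; ring
  have h2 : slack (j + 1) * (1 + slack (j + 1) * (1 / 2) ^ (j + 1) / 2) ≤ slack j := by
    have e1 : slack j = slack (j + 1) + (1 / 2) ^ (j + 1) / 2 := by unfold slack; ring
    have e2 : slack (j + 1) ^ 2 ≤ 1 := pow_le_one₀ hc.le hc1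
    have e3 : (0 : ℝ) < (1 / 2) ^ (j + 1) := by positivity
    rw [e1]; nlinarith
  calc π / 2 * e * (√2 * q + π / 4 * e)
      ≤ π / 2 * (ε * ratio ^ (j + 1) * slack (j + 1) * A) *
          (√2 * q + √2 * q * (slack (j + 1) * (1 / 2) ^ (j + 1) / 2)) := by gcongr
    _ = π * ratio * √2 / 2 * (ε * ratio ^ j * (A * q)) *
          (slack (j + 1) * (1 + slack (j + 1) * (1 / 2) ^ (j + 1) / 2)) := by ring
    _ = (ε * ratio ^ j * (A * q)) *
          (slack (j + 1) * (1 + slack (j + 1) * (1 / 2) ^ (j + 1) / 2)) := by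
        rw [hρdef, hs2]; ring
    _ ≤ (ε * ratio ^ j * (A * q)) * slack j := by gcongr
    _ = _ := by ring

lemma abs_g_iterate_mono {r : ℝ} (hr : |r| ≤ 1) {k m : ℕ} (h : k ≤ m) :
    |g^[k] r| ≤ |g^[m] r| := by
  induction m, h using Nat.le_induction with
  | base => exact le_rfl
  | succ m _ ih =>
    rw [Function.iterate_succ_apply']
    exact ih.trans (le_abs_g (abs_g_iterate_le hr m))

lemma exponent_nonneg (k : ℕ) : 0 ≤ 1 - (1 / 2 : ℝ) ^ k := by
  have : (1 / 2 : ℝ) ^ k ≤ 1 := pow_le_one₀ (by norm_num) (by norm_num)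
  linarith

/-- Error propagation through `k` of the `ℓ` applications of `g`. The exponent `1 - 2^{-k}`
satisfies `(1 - 2^{-k})/2 + 1/2 = 1 - 2^{-(k+1)}`, which matches the recursion
`1 - |s| ≤ (1 - |g s|)^{1/2}` combined with the factor `(1 - |g s|)^{1/2}` from `abs_g_sub_le`. -/
lemma error_propagation {ε r r' : ℝ} (ℓ : ℕ) (hε : 0 < ε) (hr : |r| ≤ 1)
    (hεr : ε ≤ 1 - |g^[ℓ] r|) (he : |r' - r| ≤ ε * ratio ^ ℓ / 2) (k : ℕ) (hk : k ≤ ℓ) :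
    |g^[k] r' - g^[k] r| ≤
      ε * ratio ^ (ℓ - k) * slack (ℓ - k) * (1 - |g^[k] r|) ^ (1 - (1 / 2 : ℝ) ^ k) := by
  induction k with
  | zero =>
    simp only [Function.iterate_zero, id, Nat.sub_zero, pow_zero, sub_self, rpow_zero, mul_one]
    refine he.trans ?_
    have h1 : 1 / 2 ≤ slack ℓ := by
      have : (0 : ℝ) < (1 / 2) ^ ℓ := by positivity
      unfold slack; linarith
    have h2 : 0 < ε * ratio ^ ℓ := mul_pos hε (pow_pos ratio_pos _)
    nlinarith
  | succ k ih =>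
    obtain ⟨j, hj⟩ : ∃ j, ℓ - k = j + 1 := ⟨ℓ - (k + 1), by omega⟩
    have hj' : ℓ - (k + 1) = j := by omega
    have ih := ih (by omega)
    rw [hj] at ih
    rw [hj', Function.iterate_succ_apply', Function.iterate_succ_apply']
    have hmono := abs_g_iterate_mono hr hk
    rw [Function.iterate_succ_apply'] at hmono
    have hle := abs_g_iterate_le hr k
    set s := g^[k] r with hs
    set s' := g^[k] r' with hs'
    set a := 1 - |g s| with ha
    have ha0 : 0 < a := by linarith
    have ha1 : a ≤ 1 := by have := abs_nonneg (g s); linarith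
    have hb0 : 0 ≤ 1 - |s| := by linarith
    have hb1 : 1 - |s| ≤ 1 := by have := abs_nonneg s; linarith
    have hsq : 1 - |s| ≤ √a := le_sqrt_of_sq_le (sq_one_sub_abs_le hle)
    have hex := exponent_nonneg k
    have hεq : ε ≤ √a := by
      refine le_sqrt_of_sq_le ?_
      nlinarith
    refine (abs_g_sub_le s s').trans ((error_step j (abs_nonneg _) (rpow_nonneg hb0 _)
      (rpow_le_one hb0 hb1 hex) hε hεq ih).trans ?_)
    have hfin : (1 - |s|) ^ (1 - (1 / 2 : ℝ) ^ k) * √a ≤ a ^ (1 - (1 / 2 : ℝ) ^ (k + 1)) := by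
      calc (1 - |s|) ^ (1 - (1 / 2 : ℝ) ^ k) * √a
          ≤ (√a) ^ (1 - (1 / 2 : ℝ) ^ k) * √a := by gcongr
        _ = a ^ (1 - (1 / 2 : ℝ) ^ (k + 1)) := by
            rw [sqrt_eq_rpow, ← rpow_mul ha0.le, ← rpow_add ha0]
            congr 1; ring
    have : 0 < ε * ratio ^ j * slack j :=
      mul_pos (mul_pos hε (pow_pos ratio_pos _)) (slack_pos _)
    gcongr

/-! ### Random hyperplanes -/

open MeasureTheory ProbabilityTheory

/-- The sign of a real number with values in `{-1, 1}`; the value at `0` is `1`. -/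
noncomputable def sgn (t : ℝ) : ℝ := if 0 ≤ t then 1 else -1

lemma sgn_eq (t : ℝ) : sgn t = 1 ∨ sgn t = -1 := by
  unfold sgn; split_ifs <;> simp

lemma sgn_mul_self (t : ℝ) : sgn t * sgn t = 1 := by
  rcases sgn_eq t with h | h <;> simp [h]

lemma sgn_neg {t : ℝ} (ht : t ≠ 0) : sgn (-t) = -sgn t := by
  unfold sgn
  rcases lt_or_gt_of_ne ht with h | h
  · rw [if_pos (by linarith), if_neg (by linarith)]; simp
  · rw [if_neg (by linarith), if_pos (by linarith)]

lemma measurable_sgn : Measurable sgn :=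
  Measurable.ite measurableSet_Ici measurable_const measurable_const

/-- A bounded function that is additive on `[0, π]` and takes the value `1` at `π` is linear there:
its defect `D(t) = h(t) - t/π` satisfies `|D(t)| = |D(π - t)| ≤ sup |D| / 2`. -/
lemma linear_of_additive (h : ℝ → ℝ) (hbd : ∀ t, |h t| ≤ 1) (hpi : h π = 1)
    (hadd : ∀ a b, 0 ≤ a → 0 ≤ b → a + b ≤ π → h (a + b) = h a + h b) {t : ℝ}
    (h0 : 0 ≤ t) (h1 : t ≤ π) : h t = t / π := by
  have hp := pi_pos
  have key : ∀ k : ℕ, ∀ t, 0 ≤ t → t ≤ π → |h t - t / π| ≤ 2 * (1 / 2) ^ k := by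
    intro k
    induction k with
    | zero =>
      intro t h0 h1
      have h2 : |t / π| ≤ 1 := by
        rw [abs_of_nonneg (by positivity)]; exact (div_le_one hp).2 h1
      calc _ ≤ |h t| + |t / π| := abs_sub _ _
        _ ≤ _ := by linarith [hbd t]
    | succ k ih =>
      have half : ∀ t, 0 ≤ t → t ≤ π / 2 → |h t - t / π| ≤ 2 * (1 / 2) ^ (k + 1) := by
        intro t h0 h1
        have e1 := ih (t + t) (by linarith) (by linarith)
        rw [hadd t t h0 h0 (by linarith), show h t + h t - (t + t) / π = 2 * (h t - t / π) by ring,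
          abs_mul, abs_two] at e1
        rw [pow_succ]; linarith
      intro t h0 h1
      rcases le_total t (π / 2) with h2 | h2
      · exact half t h0 h2
      · have e1 := half (π - t) (by linarith) (by linarith)
        have e2 := hadd t (π - t) h0 (by linarith) (by linarith)
        rw [add_sub_cancel, hpi] at e2
        have e3 : h (π - t) - (π - t) / π = -(h t - t / π) := by
          rw [eq_sub_of_add_eq' e2.symm]; field_simp; ring
        rwa [e3, abs_neg] at e1
  by_contra hne
  have hpos : 0 < |h t - t / π| := abs_pos.2 (sub_ne_zero.2 hne)
  obtain ⟨k, hk⟩ := exists_pow_lt_of_lt_one (half_pos hpos) (by norm_num : (1 / 2 : ℝ) < 1)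
  linarith [key k t h0 h1]

section Hyperplane

variable {E : Type*} [NormedAddCommGroup E] [InnerProductSpace ℝ E]

/-- The point at angle `t` on the unit circle of the plane with orthonormal basis `x, z`. -/
noncomputable def circlePt (x z : E) (t : ℝ) : E := cos t • x + sin t • z

lemma norm_circlePt {x z : E} (hx : ‖x‖ = 1) (hz : ‖z‖ = 1) (hxz : ⟪x, z⟫ = 0) (t : ℝ) :
    ‖circlePt x z t‖ = 1 := by
  have h : ‖circlePt x z t‖ ^ 2 = 1 := by
    rw [circlePt, norm_add_sq_real, inner_smul_left, inner_smul_right, hxz, norm_smul, norm_smul,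
      hx, hz]
    simp
  nlinarith [norm_nonneg (circlePt x z t)]

lemma reflection_circlePt {x z : E} (hx : ‖x‖ = 1) (hz : ‖z‖ = 1) (hxz : ⟪x, z⟫ = 0) (m t : ℝ) :
    (ℝ ∙ circlePt x z m).reflection (circlePt x z t) = circlePt x z (2 * m - t) := by
  have hzx : ⟪z, x⟫ = 0 := by rw [real_inner_comm, hxz]
  have hin : ⟪circlePt x z m, circlePt x z t⟫ = cos (m - t) := by
    simp [circlePt, inner_add_left, inner_add_right, inner_smul_left, inner_smul_right, hxz, hzx,
      hx, hz, cos_sub]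
    ring
  rw [Submodule.reflection_singleton_apply, norm_circlePt hx hz hxz, hin]
  have hc : 2 * cos (m - t) * cos m - cos t = cos (2 * m - t) := by
    have h1 : cos (2 * m - t) = cos ((m - t) + m) := by ring_nf
    have h2 : cos t = cos (m - (m - t)) := by ring_nf
    rw [h1, h2, cos_add, cos_sub m (m - t)]; ring
  have hs : 2 * cos (m - t) * sin m - sin t = sin (2 * m - t) := by
    have h1 : sin (2 * m - t) = sin ((m - t) + m) := by ring_nf
    have h2 : sin t = sin (m - (m - t)) := by ring_nf
    rw [h1, h2, sin_add, sin_sub m (m - t)]; ring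
  rw [circlePt, circlePt, circlePt, ← hc, ← hs]
  simp only [RCLike.ofReal_real_eq_id, id, one_pow, div_one]
  module

/-- If a hyperplane has `u(0)` and `u(a+b)` on the same side, then also `u(a)`, a conic combination
of the two. Hence the separation indicator is additive in the angle. -/
lemma sgn_additive (x z G : E) {a b : ℝ} (ha : 0 < a) (hb : 0 < b) (hab : a + b < π) :
    1 - sgn ⟪circlePt x z 0, G⟫ * sgn ⟪circlePt x z (a + b), G⟫ =
      (1 - sgn ⟪circlePt x z 0, G⟫ * sgn ⟪circlePt x z a, G⟫) +
      (1 - sgn ⟪circlePt x z a, G⟫ * sgn ⟪circlePt x z (a + b), G⟫) := by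
  have hsa : 0 < sin a := sin_pos_of_pos_of_lt_pi ha (by linarith)
  have hsb : 0 < sin b := sin_pos_of_pos_of_lt_pi hb (by linarith)
  have hsab : 0 < sin (a + b) := sin_pos_of_pos_of_lt_pi (by linarith) hab
  have key : sin (a + b) * ⟪circlePt x z a, G⟫ =
      sin b * ⟪circlePt x z 0, G⟫ + sin a * ⟪circlePt x z (a + b), G⟫ := by
    simp only [circlePt, inner_add_left, inner_smul_left, cos_zero, sin_zero, conj_trivial,
      sin_add, cos_add]
    linear_combination (⟪x, G⟫ * sin b) * (sin_sq_add_cos_sq a)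
  set p := ⟪circlePt x z 0, G⟫
  set q := ⟪circlePt x z a, G⟫
  set r := ⟪circlePt x z (a + b), G⟫
  unfold sgn
  by_cases hp : 0 ≤ p <;> by_cases hr : 0 ≤ r
  · have hq : 0 ≤ q := by
      by_contra hq
      have := mul_neg_of_pos_of_neg hsab (not_le.1 hq)
      have := mul_nonneg hsb.le hp
      have := mul_nonneg hsa.le hr
      linarith
    simp [hp, hq, hr]
  · by_cases hq : 0 ≤ q <;> simp [hp, hq, hr]
  · by_cases hq : 0 ≤ q <;> simp [hp, hq, hr]
  · have hq : ¬ 0 ≤ q := by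
      intro hq
      have := mul_nonneg hsab.le hq
      have := mul_neg_of_pos_of_neg hsb (not_le.1 hp)
      have := mul_neg_of_pos_of_neg hsa (not_le.1 hr)
      linarith
    simp [hp, hq, hr]

variable [MeasurableSpace E]

/-- The expected product of the sides on which `u` and `v` lie relative to a random hyperplane
through the origin whose normal vector has law `μ`. -/
noncomputable def signCorr (μ : Measure E) (u v : E) : ℝ := ∫ G, sgn ⟪u, G⟫ * sgn ⟪v, G⟫ ∂μ

lemma signCorr_self (μ : Measure E) [IsProbabilityMeasure μ] (u : E) : signCorr μ u u = 1 := by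
  simp [signCorr, sgn_mul_self]

lemma signCorr_comm (μ : Measure E) (u v : E) : signCorr μ u v = signCorr μ v u := by
  simp [signCorr, mul_comm]

lemma abs_signCorr_le (μ : Measure E) [IsProbabilityMeasure μ] (u v : E) :
    |signCorr μ u v| ≤ 1 := by
  have h := norm_integral_le_of_norm_le_const (μ := μ) (C := 1)
    (f := fun G => sgn ⟪u, G⟫ * sgn ⟪v, G⟫) (Filter.Eventually.of_forall fun G => by
      rcases sgn_eq ⟪u, G⟫ with h | h <;> rcases sgn_eq ⟪v, G⟫ with h' | h' <;> simp [h, h'])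
  simpa [signCorr] using h

lemma signCorr_neg_right (μ : Measure E) (u v : E) (hv : ∀ᵐ G ∂μ, ⟪v, G⟫ ≠ 0) :
    signCorr μ u (-v) = -signCorr μ u v := by
  unfold signCorr
  rw [← integral_neg]
  refine integral_congr_ae ?_
  filter_upwards [hv] with G hG
  rw [inner_neg_left, sgn_neg hG]; ring

variable [BorelSpace E]

lemma signCorr_map (μ : Measure E) (R : E ≃ₗᵢ[ℝ] E) (hR : MeasurePreserving R μ μ) (u v : E) :
    signCorr μ (R u) (R v) = signCorr μ u v := by
  unfold signCorr
  rw [← hR.integral_comp R.toHomeomorph.measurableEmbedding]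
  simp [LinearIsometryEquiv.inner_map_map]

variable [FiniteDimensional ℝ E]

lemma measurable_sgn_inner (u : E) : Measurable fun G : E => sgn ⟪u, G⟫ :=
  measurable_sgn.comp (by fun_prop)

lemma integrable_sgn_mul (μ : Measure E) [IsProbabilityMeasure μ] (u v : E) :
    Integrable (fun G => sgn ⟪u, G⟫ * sgn ⟪v, G⟫) μ := by
  refine Integrable.of_bound
    ((measurable_sgn_inner u).mul (measurable_sgn_inner v)).aestronglyMeasurable 1 ?_
  refine Filter.Eventually.of_forall fun G => ?_
  rcases sgn_eq ⟪u, G⟫ with h | h <;> rcases sgn_eq ⟪v, G⟫ with h2 | h2 <;> simp [h, h2]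

/-- Grothendieck's identity in a plane. -/
lemma signCorr_circlePt (μ : Measure E) [IsProbabilityMeasure μ]
    (hinv : ∀ R : E ≃ₗᵢ[ℝ] E, MeasurePreserving R μ μ)
    (hnull : ∀ u : E, ‖u‖ = 1 → ∀ᵐ G ∂μ, ⟪u, G⟫ ≠ 0)
    {x z : E} (hx : ‖x‖ = 1) (hz : ‖z‖ = 1) (hxz : ⟪x, z⟫ = 0) {t : ℝ} (h0 : 0 ≤ t) (h1 : t ≤ π) :
    signCorr μ (circlePt x z 0) (circlePt x z t) = 1 - 2 * t / π := by
  -- the reflection fixing `u((a+b)/2)` swaps the pairs of angles `(a, a+b)` and `(b, 0)`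
  have hrot : ∀ a b, signCorr μ (circlePt x z a) (circlePt x z (a + b)) =
      signCorr μ (circlePt x z 0) (circlePt x z b) := by
    intro a b
    rw [← signCorr_map μ _ (hinv ((ℝ ∙ circlePt x z ((a + b) / 2)).reflection)),
      reflection_circlePt hx hz hxz, reflection_circlePt hx hz hxz, signCorr_comm]
    congr 2 <;> ring
  have hpt : circlePt x z π = -circlePt x z 0 := by simp [circlePt]
  have hpi : signCorr μ (circlePt x z 0) (circlePt x z π) = -1 := by
    rw [hpt, signCorr_neg_right _ _ _ (hnull _ (norm_circlePt hx hz hxz 0)), signCorr_self]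
  have hflip : ∀ a, signCorr μ (circlePt x z 0) (circlePt x z (π - a)) =
      -signCorr μ (circlePt x z 0) (circlePt x z a) := by
    intro a
    have h2 : circlePt x z (a + (π - a)) = -circlePt x z 0 := by rw [add_sub_cancel, hpt]
    rw [← hrot a (π - a), h2, signCorr_neg_right _ _ _ (hnull _ (norm_circlePt hx hz hxz 0)),
      signCorr_comm]
  have hlin := linear_of_additive
    (fun t => (1 - signCorr μ (circlePt x z 0) (circlePt x z t)) / 2) ?_ ?_ ?_ h0 h1
  · rw [mul_div_assoc, ← hlin]; ring
  · intro t
    have := abs_le.1 (abs_signCorr_le μ (circlePt x z 0) (circlePt x z t))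
    rw [abs_le]; constructor <;> linarith
  · simp only [hpi]; norm_num
  · intro a b ha hb hab
    rcases ha.eq_or_lt with rfl | ha
    · simp [signCorr_self]
    rcases hb.eq_or_lt with rfl | hb
    · simp [signCorr_self]
    rcases hab.eq_or_lt with hab | hab
    · have hb' : b = π - a := by linarith
      rw [hab, hpi, hb', hflip]; ring
    · have key : 1 - signCorr μ (circlePt x z 0) (circlePt x z (a + b)) =
          (1 - signCorr μ (circlePt x z 0) (circlePt x z a)) +
          (1 - signCorr μ (circlePt x z a) (circlePt x z (a + b))) := by
        have e := fun u v => integral_sub (integrable_const (1 : ℝ)) (integrable_sgn_mul μ u v)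
        simp only [integral_const, probReal_univ, smul_eq_mul, mul_one] at e
        unfold signCorr
        have i := fun u v => (integrable_const (1 : ℝ)).sub (integrable_sgn_mul μ u v)
        rw [← e, ← e, ← e]
        refine Eq.trans ?_ (integral_add (i _ _) (i _ _))
        exact integral_congr_ae (Filter.Eventually.of_forall fun G => sgn_additive x z G ha hb hab)
      rw [key, hrot]; ring

/-- Grothendieck's identity for unit vectors. -/
lemma signCorr_eq (μ : Measure E) [IsProbabilityMeasure μ]
    (hinv : ∀ R : E ≃ₗᵢ[ℝ] E, MeasurePreserving R μ μ)
    (hnull : ∀ u : E, ‖u‖ = 1 → ∀ᵐ G ∂μ, ⟪u, G⟫ ≠ 0)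
    {x y : E} (hx : ‖x‖ = 1) (hy : ‖y‖ = 1) :
    signCorr μ x y = arcsinKernel ⟪x, y⟫ := by
  have hp := pi_pos
  have habs : |⟪x, y⟫| ≤ 1 := by simpa [hx, hy] using abs_real_inner_le_norm x y
  set c := ⟪x, y⟫ with hc
  set w := y - c • x with hw
  have hxw : ⟪x, w⟫ = 0 := by
    rw [hw, inner_sub_right, inner_smul_right, real_inner_self_eq_norm_sq, hx, ← hc]; ring
  have hyw : y = c • x + w := by rw [hw]; abel
  have hnorm : 1 = c ^ 2 + ‖w‖ ^ 2 := by
    have : ‖y‖ ^ 2 = c ^ 2 + ‖w‖ ^ 2 := by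
      rw [hyw, norm_add_sq_real, inner_smul_left, hxw, norm_smul, hx]; simp
    rwa [hy, one_pow] at this
  by_cases hw0 : w = 0
  · rw [hw0, norm_zero] at hnorm
    have hc2 : c = 1 ∨ c = -1 := sq_eq_one_iff.1 (by linarith)
    rw [hw0, add_zero] at hyw
    rcases hc2 with h | h
    · rw [hyw, h, one_smul, signCorr_self, arcsinKernel, arcsin_one]; field_simp
    · rw [hyw, h, neg_one_smul, signCorr_neg_right _ _ _ (hnull x hx), signCorr_self, arcsinKernel,
        arcsin_neg_one]; field_simp
  · have hwn : 0 < ‖w‖ := norm_pos_iff.2 hw0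
    have hz : ‖(‖w‖⁻¹ • w)‖ = 1 := by rw [norm_smul, norm_inv, norm_norm]; field_simp
    have hxz : ⟪x, ‖w‖⁻¹ • w⟫ = 0 := by rw [inner_smul_right, hxw, mul_zero]
    have hsin : sin (arccos c) = ‖w‖ := by
      rw [sin_arccos, show 1 - c ^ 2 = ‖w‖ ^ 2 by linarith, sqrt_sq hwn.le]
    have h := signCorr_circlePt μ hinv hnull hx hz hxz (arccos_nonneg c) (arccos_le_pi c)
    have h0 : circlePt x (‖w‖⁻¹ • w) 0 = x := by simp [circlePt]
    have h1 : circlePt x (‖w‖⁻¹ • w) (arccos c) = y := by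
      rw [circlePt, cos_arccos (abs_le.1 habs).1 (abs_le.1 habs).2, hsin, smul_smul,
        mul_inv_cancel₀ hwn.ne', one_smul, ← hyw]
    rw [h0, h1] at h
    rw [h, arcsinKernel, arccos_eq_pi_div_two_sub_arcsin]; field_simp; ring

variable (E) in
/-- The uniform probability measure on the unit ball. -/
noncomputable def ballMeasure : Measure E :=
  (volume (Metric.ball (0 : E) 1))⁻¹ • volume.restrict (Metric.ball (0 : E) 1)

instance : IsProbabilityMeasure (ballMeasure E) := by
  constructor
  rw [ballMeasure, Measure.smul_apply, Measure.restrict_apply_univ, smul_eq_mul]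
  exact ENNReal.inv_mul_cancel (Metric.measure_ball_pos _ _ one_pos).ne' measure_ball_lt_top.ne

lemma measurePreserving_ballMeasure (R : E ≃ₗᵢ[ℝ] E) :
    MeasurePreserving R (ballMeasure E) (ballMeasure E) := by
  have h := (R.measurePreserving.restrict_preimage
    (Metric.isOpen_ball.measurableSet : MeasurableSet (Metric.ball (0 : E) 1)))
  rw [LinearIsometryEquiv.preimage_ball, map_zero] at h
  exact h.smul_measure _

lemma ae_inner_ne_zero (u : E) (hu : ‖u‖ = 1) : ∀ᵐ G ∂ballMeasure E, ⟪u, G⟫ ≠ 0 := by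
  have hac : ballMeasure E ≪ volume :=
    (Measure.smul_absolutelyContinuous).trans Measure.restrict_le_self.absolutelyContinuous
  suffices hvol : ∀ᵐ G ∂(volume : Measure E), ⟪u, G⟫ ≠ 0 from hac.ae_le hvol
  have h := Measure.addHaar_submodule (volume : Measure E) (innerSL ℝ u).ker ?_
  · rw [ae_iff]
    convert h using 2
    ext G; simp
  · intro htop
    have : u ∈ (innerSL ℝ u).ker := htop ▸ Submodule.mem_top
    simp at this
    simp [this] at hu

end Hyperplane

/-! ### Sign vectors with prescribed correlations -/

/-- The sign encoded by a Boolean. -/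
def boolSign (b : Bool) : ℝ := if b then 1 else -1

lemma boolSign_eq (b : Bool) : boolSign b = 1 ∨ boolSign b = -1 := by cases b <;> simp [boolSign]

lemma boolSign_mul_self (b : Bool) : boolSign b * boolSign b = 1 := by
  cases b <;> simp [boolSign]

/-- Hyperplane rounding turns unit vectors into random signs, replacing each inner product by its
image under `arcsinKernel`. -/
lemma exists_sign_measure {ι κ : Type} [Fintype ι] [Fintype κ] (u : ι → EuclideanSpace ℝ κ)
    (hu : ∀ i, ‖u i‖ = 1) :
    ∃ μ : Measure (ι → Bool), IsProbabilityMeasure μ ∧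
      ∀ i j, ∫ ω, boolSign (ω i) * boolSign (ω j) ∂μ = arcsinKernel ⟪u i, u j⟫ := by
  let T : EuclideanSpace ℝ κ → ι → Bool := fun G i => decide (0 ≤ ⟪u i, G⟫)
  have hT : Measurable T := by
    refine measurable_pi_lambda _ fun i => measurable_to_bool ?_
    have : (fun G => T G i) ⁻¹' {true} = {G | 0 ≤ ⟪u i, G⟫} := by ext G; simp [T]
    rw [this]
    exact measurableSet_le measurable_const (by fun_prop)
  refine ⟨(ballMeasure _).map T, Measure.isProbabilityMeasure_map hT.aemeasurable, fun i j => ?_⟩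
  rw [integral_map hT.aemeasurable (measurable_of_finite _).aestronglyMeasurable,
    ← signCorr_eq _ measurePreserving_ballMeasure ae_inner_ne_zero (hu i) (hu j)]
  simp [signCorr, T, boolSign, sgn]

/-- Iterated rounding: random signs on a finite probability space are again unit vectors in a
Euclidean space, whose coordinates are weighted by square roots of probabilities. -/
lemma exists_sign_measure_iterate {ι κ : Type} [Fintype ι] [Fintype κ]
    (u : ι → EuclideanSpace ℝ κ) (hu : ∀ i, ‖u i‖ = 1) (k : ℕ) :
    ∃ μ : Measure (ι → Bool), IsProbabilityMeasure μ ∧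
      ∀ i j, ∫ ω, boolSign (ω i) * boolSign (ω j) ∂μ = arcsinKernel^[k + 1] ⟪u i, u j⟫ := by
  classical
  induction k with
  | zero => simpa using exists_sign_measure u hu
  | succ k ih =>
    obtain ⟨μ, hμ, h⟩ := ih
    let v : ι → EuclideanSpace ℝ (ι → Bool) :=
      fun i => WithLp.toLp 2 fun ω => √(μ.real {ω}) * boolSign (ω i)
    have hv : ∀ i j, ⟪v i, v j⟫ = ∫ ω, boolSign (ω i) * boolSign (ω j) ∂μ := by
      intro i j
      rw [integral_fintype .of_finite, PiLp.inner_apply]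
      refine Finset.sum_congr rfl fun ω _ => ?_
      have := mul_self_sqrt (measureReal_nonneg (μ := μ) (s := {ω}))
      simp only [v, smul_eq_mul, RCLike.inner_apply, conj_trivial]
      linear_combination (boolSign (ω i) * boolSign (ω j)) * this
    have hv1 : ∀ i, ‖v i‖ = 1 := by
      intro i
      have h2 : ‖v i‖ ^ 2 = 1 := by
        rw [← real_inner_self_eq_norm_sq, hv]; simp [boolSign_mul_self]
      nlinarith [norm_nonneg (v i)]
    obtain ⟨ν, hν, h'⟩ := exists_sign_measure v hv1
    refine ⟨ν, hν, fun i j => ?_⟩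
    rw [h', hv, h, ← Function.iterate_succ_apply' arcsinKernel]

/-! ### Sampling -/

/-- One-sided Hoeffding bound for `N` independent samples of a `[-1, 1]`-valued variable. -/
lemma hoeffding_one_sided {Ω : Type} [MeasurableSpace Ω] (μ : Measure Ω)
    [IsProbabilityMeasure μ] (Z : Ω → ℝ) (hZ : Measurable Z) (hb : ∀ ω, Z ω ∈ Set.Icc (-1) 1)
    (N : ℕ) {a : ℝ} (ha : 0 ≤ a) :
    (Measure.pi fun _ : Fin N => μ).real {ω | a ≤ ∑ k, (Z (ω k) - ∫ x, Z x ∂μ)} ≤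
      exp (-a ^ 2 / (2 * N)) := by
  have hsub := hasSubgaussianMGF_of_mem_Icc (μ := μ) hZ.aemeasurable (Filter.Eventually.of_forall hb)
  have hc : (‖(1 : ℝ) - -1‖₊ / 2) ^ 2 = 1 := by
    have : ‖(1 : ℝ) - -1‖₊ = 2 := by
      rw [← NNReal.coe_inj]; norm_num
    rw [this]; norm_num
  rw [hc] at hsub
  have hind : iIndepFun (fun (k : Fin N) (ω : Fin N → Ω) => Z (ω k) - ∫ x, Z x ∂μ)
      (Measure.pi fun _ : Fin N => μ) :=
    iIndepFun_pi (X := fun _ ω => Z ω - ∫ x, Z x ∂μ) fun _ => (hZ.sub_const _).aemeasurable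
  have h := HasSubgaussianMGF.measure_sum_ge_le_of_iIndepFun hind (c := fun _ => 1)
    (s := Finset.univ) (fun k _ => ?_) ha
  · simpa using h
  · refine HasSubgaussianMGF.of_map (Y := fun ω : Fin N → Ω => ω k)
      (X := fun ω => Z ω - ∫ x, Z x ∂μ) (measurable_pi_apply k).aemeasurable ?_
    rwa [(measurePreserving_eval (fun _ : Fin N => μ) k).map_eq]

/-- The union bound over all pairs: `N` samples with `N δ² ≥ 12 log n` approximate all correlations
to within `δ`, since `n² · 2 exp(-N δ²/2) ≤ 2 n⁻⁴ < 1`. -/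
lemma exists_samples {ι : Type} [Fintype ι] (μ : Measure (ι → Bool)) [IsProbabilityMeasure μ]
    (hn : 2 ≤ Fintype.card ι) (N : ℕ) {δ : ℝ} (hδ : 0 ≤ δ)
    (hN : 12 * log (Fintype.card ι) ≤ N * δ ^ 2) :
    ∃ ω : Fin N → ι → Bool, ∀ i j,
      |∑ k, (boolSign (ω k i) * boolSign (ω k j) - ∫ x, boolSign (x i) * boolSign (x j) ∂μ)| ≤
        N * δ := by
  classical
  set n := Fintype.card ι with hn_def
  have hn2 : (2 : ℝ) ≤ n := by exact_mod_cast hn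
  have hlog : 0 < log n := log_pos (by linarith)
  have hN0 : (0 : ℝ) < N := by
    rcases Nat.eq_zero_or_pos N with h | h
    · subst h; simp at hN; linarith
    · exact_mod_cast h
  let P := Measure.pi fun _ : Fin N => μ
  have hP : IsProbabilityMeasure P := inferInstanceAs (IsProbabilityMeasure (Measure.pi _))
  let Y : ι × ι → (Fin N → ι → Bool) → ℝ := fun p ω =>
    ∑ k, (boolSign (ω k p.1) * boolSign (ω k p.2) - ∫ x, boolSign (x p.1) * boolSign (x p.2) ∂μ)
  have htail : exp (-(N * δ) ^ 2 / (2 * N)) ≤ ((n : ℝ) ^ 6)⁻¹ := by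
    have h1 : -(N * δ) ^ 2 / (2 * N) ≤ -(6 * log n) := by
      have : -(N * δ) ^ 2 / (2 * N) = -(N * δ ^ 2 / 2) := by field_simp
      rw [this]; linarith
    have h2 : exp (6 * log n) = (n : ℝ) ^ 6 := by
      rw [show (6 : ℝ) * log n = log ((n : ℝ) ^ 6) by rw [log_pow]; norm_num,
        exp_log (by positivity)]
    calc _ ≤ exp (-(6 * log n)) := exp_le_exp.2 h1
      _ = _ := by rw [exp_neg, h2]
  have hbad : ∀ p, P.real {ω | N * δ < |Y p ω|} ≤ 2 * ((n : ℝ) ^ 6)⁻¹ := by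
    intro p
    have hb : ∀ x : ι → Bool, boolSign (x p.1) * boolSign (x p.2) ∈ Set.Icc (-1 : ℝ) 1 := by
      intro x
      rcases boolSign_eq (x p.1) with h | h <;> rcases boolSign_eq (x p.2) with h' | h' <;>
        simp [h, h']
    have hup := hoeffding_one_sided μ (fun x => boolSign (x p.1) * boolSign (x p.2))
      (measurable_of_finite _) hb N (a := N * δ) (by positivity)
    have hlo := hoeffding_one_sided μ (fun x => -(boolSign (x p.1) * boolSign (x p.2)))
      (measurable_of_finite _) (fun x => by
        have := hb x; exact ⟨by linarith [this.2], by linarith [this.1]⟩)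
      N (a := N * δ) (by positivity)
    have hsubset : {ω | N * δ < |Y p ω|} ⊆
        {ω | N * δ ≤ ∑ k, (boolSign (ω k p.1) * boolSign (ω k p.2) -
          ∫ x, boolSign (x p.1) * boolSign (x p.2) ∂μ)} ∪
        {ω | N * δ ≤ ∑ k, (-(boolSign (ω k p.1) * boolSign (ω k p.2)) -
          ∫ x, -(boolSign (x p.1) * boolSign (x p.2)) ∂μ)} := by
      intro ω hω
      rcases lt_abs.1 (show N * δ < |Y p ω| from hω) with h | h
      · exact Or.inl h.le
      · right
        refine h.le.trans (le_of_eq ?_)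
        simp only [Y]
        rw [← Finset.sum_neg_distrib, integral_neg]
        exact Finset.sum_congr rfl fun k _ => by ring
    calc _ ≤ _ := measureReal_mono hsubset
      _ ≤ _ := measureReal_union_le _ _
      _ ≤ exp (-(N * δ) ^ 2 / (2 * N)) + exp (-(N * δ) ^ 2 / (2 * N)) := add_le_add hup hlo
      _ ≤ _ := by linarith
  by_contra! hcon
  have hcover : (Set.univ : Set (Fin N → ι → Bool)) ⊆
      ⋃ p ∈ (Finset.univ : Finset (ι × ι)), {ω | N * δ < |Y p ω|} := by
    intro ω _
    obtain ⟨i, j, h⟩ := hcon ω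
    simp only [Finset.mem_univ, Set.iUnion_true, Set.mem_iUnion]
    exact ⟨(i, j), h⟩
  have h1 : (1 : ℝ) ≤ (n : ℝ) ^ 2 * (2 * ((n : ℝ) ^ 6)⁻¹) := by
    calc (1 : ℝ) = P.real Set.univ := by simp [P]
      _ ≤ _ := measureReal_mono hcover (measure_ne_top _ _)
      _ ≤ _ := measureReal_biUnion_finset_le _ _
      _ ≤ ∑ p : ι × ι, 2 * ((n : ℝ) ^ 6)⁻¹ := Finset.sum_le_sum fun p _ => hbad p
      _ = _ := by
        rw [Finset.sum_const, Finset.card_univ, Fintype.card_prod, ← hn_def, nsmul_eq_mul]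
        push_cast; ring
  have h2 : (n : ℝ) ^ 2 * (2 * ((n : ℝ) ^ 6)⁻¹) = 2 / (n : ℝ) ^ 4 := by field_simp
  rw [h2, le_div_iff₀ (by positivity)] at h1
  have h3 : (2 : ℝ) ^ 4 ≤ (n : ℝ) ^ 4 := by gcongr
  linarith

/-! ### The sketch -/

/-- For a set `S` of `n ≥ 2` unit vectors in `ℝ^d`, `ℓ ≥ 1`, `ε > 0` with
`ε < 1 − |⟨x,y⟩|` for all distinct `x, y ∈ S`, and `N = ⌈48(π/√2)^{2ℓ} log n / ε²⌉`,
there is a map `φ : S → N^{-1/2}{−1,1}^N` such that for all `x, y ∈ S`,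
`|g_ℓ(⟨φ(x),φ(y)⟩) − ⟨x,y⟩| ≤ ε(2 − 2|⟨x,y⟩|)^{1−2^{−ℓ}}`. -/
theorem additive_error_sketch_inner (d n : ℕ) (hd : 1 ≤ d)
    (S : Finset (EuclideanSpace ℝ (Fin d))) (hS : ∀ x ∈ S, ‖x‖ = 1)
    (hcard : S.card = n) (hn : 2 ≤ n) (ℓ : ℕ) (hℓ : 1 ≤ ℓ) (ε : ℝ) (hε : 0 < ε)
    (hεip : ∀ x ∈ S, ∀ y ∈ S, x ≠ y → ε < 1 - |⟪x, y⟫|)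
    (N : ℕ)
    (hN : (N : ℤ) = ⌈48 * (Real.pi / Real.sqrt 2) ^ (2 * ℓ) * Real.log n / ε ^ 2⌉) :
    ∃ φ : EuclideanSpace ℝ (Fin d) → EuclideanSpace ℝ (Fin N),
      (∀ x ∈ S, ∀ i, φ x i = 1 / Real.sqrt N ∨ φ x i = -(1 / Real.sqrt N)) ∧
      ∀ x ∈ S, ∀ y ∈ S,
        |g^[ℓ] ⟪φ x, φ y⟫ - ⟪x, y⟫| ≤
          ε * (2 - 2 * |⟪x, y⟫|) ^ (1 - (2 : ℝ) ^ (-(ℓ : ℝ))) := by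
  classical
  have hρ := ratio_pos
  have hn2 : (2 : ℝ) ≤ n := by exact_mod_cast hn
  have hlog : 0 < log n := log_pos (by linarith)
  have hNge : 48 * (π / √2) ^ (2 * ℓ) * log n / ε ^ 2 ≤ N := by
    have h := Int.le_ceil (48 * (π / √2) ^ (2 * ℓ) * log n / ε ^ 2)
    rw [← hN] at h
    exact_mod_cast h
  have hN0 : (0 : ℝ) < N := lt_of_lt_of_le (by positivity) hNge
  -- the tolerance with which the innermost correlation is estimated
  set δ := ε * ratio ^ ℓ / 2 with hδ
  have hδ0 : 0 < δ := by positivity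
  have hNδ : 12 * log n ≤ N * δ ^ 2 := by
    have h1 : (π / √2) ^ (2 * ℓ) * (ratio ^ ℓ) ^ 2 = 1 := by
      rw [← pow_mul, mul_comm ℓ 2, ← mul_pow, ratio]
      have : π / √2 * (√2 / π) = 1 := by field_simp
      rw [this, one_pow]
    calc 12 * log n
        = 12 * log n * ((π / √2) ^ (2 * ℓ) * (ratio ^ ℓ) ^ 2) := by rw [h1, mul_one]
      _ = 48 * (π / √2) ^ (2 * ℓ) * log n / ε ^ 2 * δ ^ 2 := by rw [hδ]; field_simp; ring
      _ ≤ N * δ ^ 2 := by gcongr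
  obtain ⟨k, rfl⟩ : ∃ k, ℓ = k + 1 := ⟨ℓ - 1, by omega⟩
  obtain ⟨μ, hμ, hcorr⟩ := exists_sign_measure_iterate (ι := S)
    (fun x => (x : EuclideanSpace ℝ (Fin d))) (fun x => hS x x.2) k
  have hcardS : Fintype.card S = n := by rw [Fintype.card_coe, hcard]
  obtain ⟨ω, hω⟩ := exists_samples μ (by rw [hcardS]; exact hn) N hδ0.le (by rw [hcardS]; exact hNδ)
  have hsN : √(N : ℝ) * √(N : ℝ) = N := mul_self_sqrt hN0.le
  have hsN0 : 0 < √(N : ℝ) := sqrt_pos.2 hN0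
  let φ : EuclideanSpace ℝ (Fin d) → EuclideanSpace ℝ (Fin N) := fun x =>
    WithLp.toLp 2 fun i => if hx : x ∈ S then boolSign (ω i ⟨x, hx⟩) / √(N : ℝ) else 0
  have hφ : ∀ x (hx : x ∈ S) i, φ x i = boolSign (ω i ⟨x, hx⟩) / √(N : ℝ) := by
    intro x hx i; simp [φ, hx]
  have hinner : ∀ x (hx : x ∈ S) y (hy : y ∈ S), ⟪φ x, φ y⟫ =
      (∑ i, boolSign (ω i ⟨x, hx⟩) * boolSign (ω i ⟨y, hy⟩)) / N := by
    intro x hx y hy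
    rw [PiLp.inner_apply, Finset.sum_div]
    refine Finset.sum_congr rfl fun i _ => ?_
    rw [hφ x hx, hφ y hy]
    simp only [RCLike.inner_apply, conj_trivial]
    rw [div_mul_div_comm, hsN, mul_comm]
  have hexp : (2 : ℝ) ^ (-((k + 1 : ℕ) : ℝ)) = (1 / 2) ^ (k + 1) := by
    rw [rpow_neg (by norm_num), rpow_natCast, one_div, inv_pow]
  refine ⟨φ, fun x hx i => ?_, fun x hx y hy => ?_⟩
  · rw [hφ x hx]
    rcases boolSign_eq (ω i ⟨x, hx⟩) with h | h
    · left; rw [h]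
    · right; rw [h, neg_div]
  · rw [hexp]
    have habs : |⟪x, y⟫| ≤ 1 := by simpa [hS x hx, hS y hy] using abs_real_inner_le_norm x y
    by_cases hxy : x = y
    · -- on the diagonal the left-hand side vanishes because `1` is a fixed point of `g`
      subst hxy
      have h1 : ⟪φ x, φ x⟫ = 1 := by
        rw [hinner x hx x hx]
        simp only [boolSign_mul_self]
        simp [hN0.ne']
      have h2 : ⟪x, x⟫ = 1 := by rw [real_inner_self_eq_norm_sq, hS x hx, one_pow]
      rw [h1, h2, Function.iterate_fixed g_one]
      simp only [sub_self, abs_zero, abs_one, mul_one]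
      exact mul_nonneg hε.le (rpow_nonneg le_rfl _)
    · have hsep := hεip x hx y hy hxy
      have hr := abs_arcsinKernel_iterate_le habs (k + 1)
      have hgr := g_iterate_arcsinKernel_iterate habs (k + 1)
      set r := arcsinKernel^[k + 1] ⟪x, y⟫ with hrdef
      have herr : |⟪φ x, φ y⟫ - r| ≤ ε * ratio ^ (k + 1) / 2 := by
        have h := hω ⟨x, hx⟩ ⟨y, hy⟩
        rw [hcorr, Finset.sum_sub_distrib, Finset.sum_const, Finset.card_univ, Fintype.card_fin,
          nsmul_eq_mul] at h
        rw [hinner x hx y hy, ← hδ]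
        have e : (∑ i, boolSign (ω i ⟨x, hx⟩) * boolSign (ω i ⟨y, hy⟩)) / N - r =
            ((∑ i, boolSign (ω i ⟨x, hx⟩) * boolSign (ω i ⟨y, hy⟩)) - N * r) / N := by
          field_simp
        rw [e, abs_div, abs_of_pos hN0, div_le_iff₀ hN0, mul_comm δ]
        exact h
      have h := error_propagation (k + 1) hε hr (by rw [hgr]; exact hsep.le) herr (k + 1) le_rfl
      have hs0 : slack 0 = 1 := by norm_num [slack]
      rw [hgr, Nat.sub_self, pow_zero, hs0, mul_one, mul_one] at h
      refine h.trans ?_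
      have := exponent_nonneg (k + 1)
      have h0 : 0 ≤ 1 - |⟪x, y⟫| := by linarith
      exact mul_le_mul_of_nonneg_left (rpow_le_rpow h0 (by linarith) this) hε.le
end

section
/- For every ℓ ∈ ℕ⁺ and every t ∈ [0, 1], 1 − f_ℓ(t) ≤ (2 − 2t)^{2^{−ℓ}}. -/
/-!
Put `θ = arccos t ∈ [0, π/2]`, so that `1 - f t = (2/π) θ`. Concavity of `sin` on `[0, π/4]` gives
`sin (θ/2) ≥ (2θ/π) sin (π/4)`, and squaring, `(1 - f t)² ≤ 2 sin² (θ/2) = 1 - t`. Since `f` maps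
`[0, 1]` into itself, iterating this yields the sharper bound `1 - f_ℓ(t) ≤ (1 - t)^{2^{-ℓ}}`.
-/

/-- `f(t) = (2/π)·arcsin(t)`. -/
noncomputable def f (t : ℝ) : ℝ := (2 / Real.pi) * Real.arcsin t

lemma f_mem_Icc {t : ℝ} (ht : t ∈ Set.Icc (0 : ℝ) 1) : f t ∈ Set.Icc (0 : ℝ) 1 := by
  have hpi := Real.pi_pos
  have h0 : 0 ≤ Real.arcsin t := Real.arcsin_nonneg.2 ht.1
  have h1 := Real.arcsin_le_pi_div_two t
  unfold f
  refine ⟨by positivity, ?_⟩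
  calc 2 / Real.pi * Real.arcsin t ≤ 2 / Real.pi * (Real.pi / 2) := by gcongr
    _ = 1 := by field_simp

lemma one_sub_f_sq_le {t : ℝ} (ht : t ∈ Set.Icc (0 : ℝ) 1) : (1 - f t) ^ 2 ≤ 1 - t := by
  have hpi := Real.pi_pos
  have hf := f_mem_Icc ht
  -- `u` is the convex weight with `θ / 2 = u * (π / 4)`.
  set u := 1 - f t with hu
  have hu0 : 0 ≤ u := by linarith [hf.2]
  have hu1 : u ≤ 1 := by linarith [hf.1]
  have harc : Real.arccos t = 2 * (u * (Real.pi / 4)) := by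
    rw [hu, Real.arccos, f]
    field_simp
    ring
  have hcos : t = 1 - 2 * Real.sin (u * (Real.pi / 4)) ^ 2 := by
    rw [← Real.cos_arccos (by linarith [ht.1]) ht.2, harc, Real.cos_two_mul, Real.cos_sq']
    ring
  have hconc := strictConcaveOn_sin_Icc.concaveOn.2
    (show (0 : ℝ) ∈ Set.Icc 0 Real.pi from ⟨le_rfl, hpi.le⟩)
    (show Real.pi / 4 ∈ Set.Icc 0 Real.pi from ⟨by positivity, by linarith⟩)
    (sub_nonneg.2 hu1) hu0 (by ring)
  simp only [smul_eq_mul, mul_zero, zero_add, Real.sin_zero, Real.sin_pi_div_four] at hconc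
  have hsq := pow_le_pow_left₀ (by positivity) hconc 2
  rw [mul_pow, div_pow, Real.sq_sqrt (by norm_num)] at hsq
  linarith

lemma one_sub_iterate_f_le_rpow (ℓ : ℕ) : ∀ t ∈ Set.Icc (0 : ℝ) 1,
    1 - f^[ℓ] t ≤ (1 - t) ^ ((2 : ℝ) ^ (-(ℓ : ℝ))) := by
  induction ℓ with
  | zero => intro t _; simp
  | succ n ih =>
    intro t ht
    have hf := f_mem_Icc ht
    have h0 : 0 ≤ 1 - t := by linarith [ht.2]
    have hstep : 1 - f t ≤ (1 - t) ^ (2⁻¹ : ℝ) := by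
      rw [← one_div, ← Real.sqrt_eq_rpow]
      exact Real.le_sqrt_of_sq_le (one_sub_f_sq_le ht)
    have hexp : (2 : ℝ) ^ (-((n + 1 : ℕ) : ℝ)) = 2⁻¹ * (2 : ℝ) ^ (-(n : ℝ)) := by
      rw [← Real.rpow_neg_one, ← Real.rpow_add two_pos]
      push_cast
      ring_nf
    rw [Function.iterate_succ_apply, hexp, Real.rpow_mul h0]
    exact (ih _ hf).trans
      (Real.rpow_le_rpow (by linarith [hf.2]) hstep (by positivity))

/-- For every `ℓ ∈ ℕ⁺` and every `t ∈ [0,1]`, `1 − f_ℓ(t) ≤ (2 − 2t)^{2^{−ℓ}}`. -/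
theorem one_sub_iterate_f_le (ℓ : ℕ) (hℓ : 1 ≤ ℓ) (t : ℝ) (ht : t ∈ Set.Icc (0 : ℝ) 1) :
    1 - f^[ℓ] t ≤ (2 - 2 * t) ^ ((2 : ℝ) ^ (-(ℓ : ℝ))) := by
  have h1 := ht.2
  exact (one_sub_iterate_f_le_rpow ℓ t ht).trans
    (Real.rpow_le_rpow (by linarith) (by linarith) (by positivity))
end
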